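/- arXiv:2007.01254 — 6 statements merged into one kernel-verified Lean document; each statement's English description precedes it below -/
import Mathlib

section
/- For every fixed τ ≥ 0, the rescaled correlation function of the Lamperti transform of integrated fractional Brownian motion satisfies lim_{H→0⁺} ρ_H(τ/H) = e^{−τ}, where for H ∈ (0,1) and s ≥ 0, ρ_H(s) := (1+H)(e^{−Hs}+e^{Hs})/(1+2H) + (e^{s/2}−e^{−s/2})^{2(1+H)}/(2(1+2H)) − (e^{(1+H)s}+e^{−(1+H)s})/(2(1+2H)). (At τ = 0 interpret ρ_H(τ/H) as ρ_H(0) = 1.) -/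
/-! With `s = τ / H` and `x = exp (-s)`, the two large terms of `ρ_H(s)` combine:
`(e^{s/2} - e^{-s/2})^{2(1+H)} - e^{(1+H)s} = e^τ * ((1 - x)^{2(1+H)} - 1) / x`.
As `H → 0⁺` with `τ > 0` we have `x → 0`, and the quotient lies between `-2(1+H)` (Bernoulli) and
`-2 + x` (as `(1 - x)^{2(1+H)} ≤ (1 - x)^2`), so it tends to `-2`. Hence
`ρ_H(τ/H) → (e^{-τ} + e^τ) + e^τ * (-2) / 2 = e^{-τ}`. For `τ = 0` the function is `1` for every
`H > 0`. -/

open Real Filter Topology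

/-- Correlation function of the normalized Lamperti transform of integrated
fractional Brownian motion with Hurst parameter `H`. -/
noncomputable def rhoIFBM (H s : ℝ) : ℝ :=
  (1 + H) * (Real.exp (-H * s) + Real.exp (H * s)) / (1 + 2 * H)
    + (Real.exp (s / 2) - Real.exp (-s / 2)) ^ (2 * (1 + H)) / (2 * (1 + 2 * H))
    - (Real.exp ((1 + H) * s) + Real.exp (-(1 + H) * s)) / (2 * (1 + 2 * H))

/-- The lower bound is Bernoulli's inequality; the upper one lowers the exponent to `2`. -/
theorem quotient_bounds {H x : ℝ} (hH : 0 < H) (hx : 0 < x) (hx1 : x < 1) :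
    -2 * (1 + H) ≤ ((1 - x) ^ (2 * (1 + H)) - 1) / x ∧
      ((1 - x) ^ (2 * (1 + H)) - 1) / x ≤ -2 + x := by
  constructor
  · rw [le_div_iff₀ hx]
    have h := one_add_mul_self_le_rpow_one_add (s := -x) (p := 2 * (1 + H))
      (by linarith) (by linarith)
    rw [← sub_eq_add_neg] at h
    linarith
  · rw [div_le_iff₀ hx]
    have h := Real.rpow_le_rpow_of_exponent_ge (x := 1 - x) (y := 2 * (1 + H)) (z := 2)
      (by linarith) (by linarith) (by linarith)
    rw [Real.rpow_two] at h
    nlinarith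

/-- Exact rewriting of `ρ_H(τ/H)` in which the cancellation of the two terms of size
`e^{(1+H)τ/H}` has been carried out. -/
theorem rhoIFBM_eq {H τ : ℝ} (hH : 0 < H) (hτ : 0 < τ) :
    rhoIFBM H (τ / H) = (1 + H) * (exp (-τ) + exp τ) / (1 + 2 * H)
      + exp τ * (((1 - exp (-(τ / H))) ^ (2 * (1 + H)) - 1) / exp (-(τ / H))) / (2 * (1 + 2 * H))
      - exp (-τ) * exp (-(τ / H)) / (2 * (1 + 2 * H)) := by
  have hHs : H * (τ / H) = τ := by field_simp
  have hs : 0 < τ / H := div_pos hτ hH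
  unfold rhoIFBM
  generalize τ / H = s at *
  have hx1 : exp (-s) < 1 := Real.exp_lt_one_iff.mpr (by linarith)
  have e1 : exp (s / 2) - exp (-s / 2) = exp (s / 2) * (1 - exp (-s)) := by
    rw [mul_sub, mul_one, ← exp_add]; congr 2; ring
  have e2 : exp (s / 2) ^ (2 * (1 + H)) = exp τ / exp (-s) := by
    rw [← exp_mul, ← exp_sub]; congr 1; linarith
  have e3 : exp ((1 + H) * s) = exp τ / exp (-s) := by
    rw [← exp_sub]; congr 1; linarith
  have e4 : exp (-(1 + H) * s) = exp (-τ) * exp (-s) := by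
    rw [← exp_add]; congr 1; linarith
  have e5 : -H * s = -τ := by linarith
  rw [e1, Real.mul_rpow (exp_pos _).le (by linarith), e2, e3, e4, e5, hHs]
  ring

theorem stmt0 (τ : ℝ) (hτ : 0 ≤ τ) :
    Tendsto (fun H : ℝ => rhoIFBM H (τ / H)) (𝓝[>] 0) (𝓝 (Real.exp (-τ))) := by
  have hpos : ∀ᶠ H : ℝ in 𝓝[>] 0, 0 < H := self_mem_nhdsWithin
  have hid : Tendsto (fun H : ℝ => H) (𝓝[>] 0) (𝓝 0) := tendsto_nhdsWithin_of_tendsto_nhds tendsto_id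
  rcases hτ.eq_or_lt with rfl | hτ
  · refine tendsto_const_nhds.congr' ?_
    filter_upwards [hpos] with H hH
    have h0 : (0 : ℝ) ^ (2 * (1 + H)) = 0 := Real.zero_rpow (by positivity)
    simp [rhoIFBM, h0]
    field_simp
    ring
  · have hx : Tendsto (fun H : ℝ => exp (-(τ / H))) (𝓝[>] 0) (𝓝 0) := by
      refine tendsto_exp_neg_atTop_nhds_zero.comp ?_
      exact tendsto_inv_nhdsGT_zero.const_mul_atTop hτ
    have hb : ∀ᶠ H : ℝ in 𝓝[>] 0, _ := hpos.mono fun H hH =>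
      quotient_bounds hH (exp_pos (-(τ / H)))
        (Real.exp_lt_one_iff.mpr (neg_lt_zero.mpr (div_pos hτ hH)))
    have hR : Tendsto (fun H : ℝ =>
        ((1 - exp (-(τ / H))) ^ (2 * (1 + H)) - 1) / exp (-(τ / H))) (𝓝[>] 0) (𝓝 (-2)) := by
      refine tendsto_of_tendsto_of_tendsto_of_le_of_le' ?_ ?_
        (hb.mono fun _ h => h.1) (hb.mono fun _ h => h.2)
      · simpa using (hid.const_add 1).const_mul (-2)
      · simpa using hx.const_add (-2)
    have hd : Tendsto (fun H : ℝ => 1 + 2 * H) (𝓝[>] 0) (𝓝 1) := by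
      simpa using (hid.const_mul 2).const_add 1
    have hd2 : Tendsto (fun H : ℝ => 2 * (1 + 2 * H)) (𝓝[>] 0) (𝓝 2) := by
      simpa using hd.const_mul 2
    have hn : Tendsto (fun H : ℝ => 1 + H) (𝓝[>] 0) (𝓝 1) := by
      simpa using hid.const_add 1
    have main := (((hn.mul_const (exp (-τ) + exp τ)).div hd one_ne_zero).add
      ((hR.const_mul (exp τ)).div hd2 two_ne_zero)).sub
      ((hx.const_mul (exp (-τ))).div hd2 two_ne_zero)
    have hlim : 1 * (exp (-τ) + exp τ) / 1 + exp τ * (-2) / 2 - exp (-τ) * 0 / 2 = exp (-τ) := by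
      ring
    rw [hlim] at main
    refine main.congr' ?_
    filter_upwards [hpos] with H hH
    exact (rhoIFBM_eq hH hτ).symm
end

section
/- For every H ∈ (0,1/2) and every τ ≥ 0, one has ρ_H(τ/H) ≤ (3/2)·e^{−τ}, where ρ_H is defined as ρ_H(s) := (1+H)(e^{−Hs}+e^{Hs})/(1+2H) + (e^{s/2}−e^{−s/2})^{2(1+H)}/(2(1+2H)) − (e^{(1+H)s}+e^{−(1+H)s})/(2(1+2H)). -/
/-!
Put `x = e^{-s}`, where `s = τ / H`, and `y = e^{-τ} = x ^ H`. Factoring `e^{s/2}` out of the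
fractional power gives `(e^{s/2} - e^{-s/2}) ^ (2 + 2H) = e^{(1+H)s} (1 - x) ^ (2 + 2H)`, and
Bernoulli's inequality with exponent `2H ≤ 1` gives
`(1 - x) ^ (2 + 2H) ≤ (1 - x)² (1 - 2Hx)`.
After expansion the terms in `e^{(1+H)s}` and `e^{Hs}` cancel, and the only positive one left
besides `2(1 + H) y` is `(1 + 4H) x e^{Hs}`, which is at most `(1 + 4H) y` because `x ≤ y²` for
`H ≤ 1/2`. The coefficients of `y` then add up to `2(1 + H) + (1 + 4H) = 3(1 + 2H)`.
-/

open Real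

/-- Bernoulli's inequality applied to the factor `(1 - x) ^ (2H)` of `(1 - x) ^ (2 + 2H)`. -/
lemma one_sub_rpow_le {H x : ℝ} (h0 : 0 < H) (h1 : H < 1 / 2) (hx1 : x ≤ 1) :
    (1 - x) ^ (2 * (1 + H)) ≤ (1 - x) ^ 2 * (1 - 2 * H * x) := by
  have hb := rpow_one_add_le_one_add_mul_self (s := -x) (p := 2 * H)
    (by linarith) (by linarith) (by linarith)
  rw [show 2 * (1 + H) = 2 + 2 * H by ring,
    Real.rpow_add' (by linarith) (by linarith), Real.rpow_two]
  refine mul_le_mul_of_nonneg_left ?_ (sq_nonneg _)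
  calc (1 - x) ^ (2 * H) = (1 + -x) ^ (2 * H) := by rw [sub_eq_add_neg]
    _ ≤ _ := hb
    _ = _ := by ring

lemma exp_half_sub_rpow (H s : ℝ) (hs : 0 ≤ s) :
    (Real.exp (s / 2) - Real.exp (-s / 2)) ^ (2 * (1 + H))
      = Real.exp ((1 + H) * s) * (1 - Real.exp (-s)) ^ (2 * (1 + H)) := by
  have hx : Real.exp (-s) ≤ 1 := Real.exp_le_one_iff.2 (by linarith)
  have h : Real.exp (s / 2) - Real.exp (-s / 2) = Real.exp (s / 2) * (1 - Real.exp (-s)) := by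
    rw [mul_sub, mul_one, ← Real.exp_add]
    ring_nf
  rw [h, Real.mul_rpow (Real.exp_pos _).le (by linarith), ← Real.exp_mul]
  ring_nf

theorem stmt2 (H : ℝ) (hH : H ∈ Set.Ioo (0 : ℝ) (1 / 2)) (τ : ℝ) (hτ : 0 ≤ τ) :
    rhoIFBM H (τ / H) ≤ 3 / 2 * Real.exp (-τ) := by
  obtain ⟨h0, h1⟩ := hH
  obtain ⟨s, rfl⟩ : ∃ s, τ = H * s := ⟨τ / H, by field_simp⟩
  have hs : 0 ≤ s := nonneg_of_mul_nonneg_right hτ h0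
  rw [mul_div_cancel_left₀ s h0.ne', rhoIFBM, exp_half_sub_rpow H s hs]
  have hP := one_sub_rpow_le h0 h1 (Real.exp_le_one_iff.2 (by linarith : -s ≤ 0))
  have hEx : Real.exp ((1 + H) * s) * Real.exp (-s) = Real.exp (H * s) := by
    rw [← Real.exp_add]
    ring_nf
  have hxY : Real.exp (-s) * Real.exp (H * s) ≤ Real.exp (-(H * s)) := by
    rw [← Real.exp_add, Real.exp_le_exp]
    nlinarith
  rw [show -H * s = -(H * s) by ring]
  have hZ := Real.exp_pos (-(1 + H) * s)
  have hE := Real.exp_pos ((1 + H) * s)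
  have hY := Real.exp_pos (H * s)
  generalize (1 - Real.exp (-s)) ^ (2 * (1 + H)) = P at *
  generalize Real.exp ((1 + H) * s) = E at *
  generalize Real.exp (-(1 + H) * s) = Z at *
  generalize Real.exp (-(H * s)) = X at *
  generalize Real.exp (H * s) = Y at *
  generalize Real.exp (-s) = x at *
  have hEP : E * P ≤ E - (2 + 2 * H) * Y + (1 + 4 * H) * X := by
    calc E * P ≤ E * ((1 - x) ^ 2 * (1 - 2 * H * x)) := mul_le_mul_of_nonneg_left hP hE.le
      _ = E - (2 + 2 * H) * (E * x) + (1 + 4 * H) * (x * (E * x))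
            - 2 * H * (x ^ 2 * (E * x)) := by ring
      _ ≤ E - (2 + 2 * H) * Y + (1 + 4 * H) * X := by
        rw [hEx]
        have h2 : 0 ≤ 2 * H * (x ^ 2 * Y) := by positivity
        have h3 : (1 + 4 * H) * (x * Y) ≤ (1 + 4 * H) * X :=
          mul_le_mul_of_nonneg_left hxY (by linarith)
        linarith
  have hD : 0 < 2 * (1 + 2 * H) := by linarith
  have key : (1 + H) * (X + Y) / (1 + 2 * H) + E * P / (2 * (1 + 2 * H))
      - (E + Z) / (2 * (1 + 2 * H))
      = (2 * (1 + H) * (X + Y) + E * P - (E + Z)) / (2 * (1 + 2 * H)) := by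
    field_simp
  rw [key, div_le_iff₀ hD]
  linarith
end

section
/- For every H ∈ (0,1/2) and every ε > 0, one has 1 − ρ_H(ε/H) ≤ (5/2)·ε, where ρ_H is defined as ρ_H(s) := (1+H)(e^{−Hs}+e^{Hs})/(1+2H) + (e^{s/2}−e^{−s/2})^{2(1+H)}/(2(1+2H)) − (e^{(1+H)s}+e^{−(1+H)s})/(2(1+2H)). -/
/-!
Put `x = exp (-s)` with `s = ε / H`, so that `H s = ε`. Since
`exp (s/2) - exp (-s/2) = exp (s/2) * (1 - x)`, the middle term of `ρ_H(s)` is a multiple of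
`exp s * exp ε * (1 - x) ^ (2 + 2H)`. The power series of `(1 - x) ^ q`, `1 ≤ q ≤ 2`, has
nonnegative coefficients from the quadratic one on, so `(1 - x) ^ q ≥ 1 - q x + q (q - 1) / 2 x²`;
for `q = 1 + 2H`, after multiplication by `1 - x`, this yields
`ρ_H(s) ≥ exp (-ε) * (2 + 2H - x) / (2 + 4H) + exp ε * x * (1 + H - H x) / 2`.
Inserting `exp (-ε) ≥ 1 - ε` and `exp ε ≥ 1` gives
`1 - ρ_H(s) ≤ ε + H (1 - x) (2 - (1 + 2H) x) / (2 + 4H)`. The last term is at most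
`H (1 - x) ≤ H s = ε`, so that in fact `1 - ρ_H(ε / H) ≤ 2 ε`.
-/

open Real

/-- Second-order lower bound for `(1 - x) ^ q`. The derivative of the difference of the two sides
is nonnegative by the concave Bernoulli inequality for the exponent `q - 1 ∈ [0, 1]`. -/
lemma one_sub_rpow_ge {q x : ℝ} (hq1 : 1 ≤ q) (hq2 : q ≤ 2) (hx0 : 0 ≤ x) (hx1 : x ≤ 1) :
    1 - q * x + q * (q - 1) / 2 * x ^ 2 ≤ (1 - x) ^ q := by
  have hd : ∀ y : ℝ, HasDerivAt (fun y : ℝ => (1 - y) ^ q - (1 - q * y + q * (q - 1) / 2 * y ^ 2))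
      (q * (1 - (q - 1) * y - (1 - y) ^ (q - 1))) y := by
    intro y
    have h1 : HasDerivAt (fun y : ℝ => (1 - y) ^ q) (-1 * q * (1 - y) ^ (q - 1)) y :=
      ((hasDerivAt_id y).const_sub 1).rpow_const (Or.inr hq1)
    have h2 : HasDerivAt (fun y : ℝ => 1 - q * y + q * (q - 1) / 2 * y ^ 2)
        (-(q * 1) + q * (q - 1) / 2 * (2 * y)) y := by
      have h3 := ((hasDerivAt_id y).const_mul q).const_sub 1
      have h4 := (hasDerivAt_pow 2 y).const_mul (q * (q - 1) / 2)
      exact (h3.add h4).congr_deriv (by norm_num)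
    exact (h1.sub h2).congr_deriv (by ring)
  have hmono : MonotoneOn
      (fun y : ℝ => (1 - y) ^ q - (1 - q * y + q * (q - 1) / 2 * y ^ 2)) (Set.Icc 0 1) := by
    refine monotoneOn_of_deriv_nonneg (convex_Icc 0 1)
      (fun y _ => (hd y).continuousAt.continuousWithinAt)
      (fun y _ => (hd y).differentiableAt.differentiableWithinAt) ?_
    intro y hy
    rw [interior_Icc] at hy
    rw [(hd y).deriv]
    have hb := rpow_one_add_le_one_add_mul_self (s := -y) (by linarith [hy.2])
      (p := q - 1) (by linarith) (by linarith)
    rw [← sub_eq_add_neg] at hb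
    exact mul_nonneg (by linarith) (by linarith)
  have h := hmono (Set.left_mem_Icc.2 zero_le_one) ⟨hx0, hx1⟩ hx0
  norm_num at h
  linarith

theorem stmt3 (H : ℝ) (hH : H ∈ Set.Ioo (0 : ℝ) (1 / 2)) (ε : ℝ) (hε : 0 < ε) :
    1 - rhoIFBM H (ε / H) ≤ 5 / 2 * ε := by
  obtain ⟨hH0, hH1⟩ := hH
  obtain ⟨s, hs⟩ : ∃ s, s = ε / H := ⟨_, rfl⟩
  have hHs : H * s = ε := by rw [hs]; field_simp
  have hs0 : 0 < s := by rw [hs]; positivity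
  rw [← hs]
  obtain ⟨x, hx⟩ : ∃ x, x = Real.exp (-s) := ⟨_, rfl⟩
  have hx0 : 0 < x := hx ▸ Real.exp_pos _
  have hx1 : x ≤ 1 := by rw [hx, Real.exp_le_one_iff]; linarith
  have hxs : 1 - x ≤ s := by have := Real.add_one_le_exp (-s); rw [← hx] at this; linarith
  have hEx : Real.exp s * x = 1 := by rw [hx, ← Real.exp_add]; simp
  have hsinh : (Real.exp (s / 2) - Real.exp (-s / 2)) ^ (2 * (1 + H))
      = Real.exp s * Real.exp ε * ((1 - x) ^ (1 + 2 * H) * (1 - x)) := by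
    have h1 : Real.exp (s / 2) - Real.exp (-s / 2) = Real.exp (s / 2) * (1 - x) := by
      rw [hx, mul_sub, mul_one, ← Real.exp_add]; ring_nf
    have h2 : (1 - x) ^ (2 * (1 + H)) = (1 - x) ^ (1 + 2 * H) * (1 - x) := by
      rw [← Real.rpow_add_one' (by linarith) (by linarith)]; ring_nf
    rw [h1, Real.mul_rpow (Real.exp_pos _).le (by linarith), h2, ← Real.exp_mul, ← Real.exp_add,
      ← hHs]
    ring_nf
  have hp1 : Real.exp ((1 + H) * s) = Real.exp s * Real.exp ε := by
    rw [← Real.exp_add, ← hHs]; ring_nf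
  have hp2 : Real.exp (-(1 + H) * s) = x * Real.exp (-ε) := by
    rw [hx, ← Real.exp_add, ← hHs]; ring_nf
  have hA : 1 ≤ Real.exp ε := Real.one_le_exp hε.le
  have hB : 1 - ε ≤ Real.exp (-ε) := by linarith [Real.add_one_le_exp (-ε)]
  have hkey : Real.exp s * Real.exp ε - 2 * (1 + H) * Real.exp ε
      + (1 + 2 * H) * (Real.exp ε * x * (1 + H - H * x))
      ≤ Real.exp s * Real.exp ε * ((1 - x) ^ (1 + 2 * H) * (1 - x)) := by
    have h := one_sub_rpow_ge (q := 1 + 2 * H) (by linarith) (by linarith) hx0.le hx1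
    have h' := mul_le_mul_of_nonneg_left (mul_le_mul_of_nonneg_right h (sub_nonneg.2 hx1))
      (mul_pos (Real.exp_pos s) (Real.exp_pos ε)).le
    refine le_trans (le_of_eq ?_) h'
    linear_combination (Real.exp ε * (2 * (1 + H) - (1 + 2 * H) * (1 + H) * x
      + (1 + 2 * H) * H * x ^ 2)) * hEx
  have hA' : x * (1 + H - H * x) ≤ Real.exp ε * x * (1 + H - H * x) := by
    rw [mul_assoc]
    refine le_mul_of_one_le_left (mul_nonneg hx0.le ?_) hA
    nlinarith
  have hB' : (1 - ε) * (2 + 2 * H - x) ≤ Real.exp (-ε) * (2 + 2 * H - x) :=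
    mul_le_mul_of_nonneg_right hB (by linarith)
  have hHx : H * (1 - x) ≤ ε := by rw [← hHs]; exact mul_le_mul_of_nonneg_left hxs hH0.le
  have hHx0 : 0 ≤ H * (1 - x) := mul_nonneg hH0.le (by linarith)
  have hρ : rhoIFBM H s = (2 * (1 + H) * (Real.exp (-ε) + Real.exp ε)
      + Real.exp s * Real.exp ε * ((1 - x) ^ (1 + 2 * H) * (1 - x))
      - (Real.exp s * Real.exp ε + x * Real.exp (-ε))) / (2 * (1 + 2 * H)) := by
    have h3 : 1 + 2 * H ≠ 0 := by positivity
    rw [rhoIFBM, hsinh, hp1, hp2, neg_mul, hHs]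
    field_simp
  have hbound : 1 - 2 * ε ≤ rhoIFBM H s := by
    rw [hρ, le_div_iff₀ (by positivity)]
    have h4 : H * (1 - x) * (2 - (1 + 2 * H) * x) ≤ ε * (2 * (1 + 2 * H)) := by
      nlinarith [mul_pos hH0 hx0, mul_nonneg hHx0 hx0.le, mul_nonneg hHx0 (mul_pos hH0 hx0).le,
        mul_nonneg hHx0 hH0.le, mul_pos hH0 hε]
    nlinarith [mul_le_mul_of_nonneg_left hA' (by positivity : 0 ≤ 1 + 2 * H), mul_pos hε hx0,
      mul_pos hH0 hε]
  linarith
end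

section
/- For every H ∈ (1/2,1) and every τ ≥ 0, one has ρ_H(τ/(1−H)) ≤ (13/6)·e^{−τ}, where ρ_H is defined as ρ_H(s) := (1+H)(e^{−Hs}+e^{Hs})/(1+2H) + (e^{s/2}−e^{−s/2})^{2(1+H)}/(2(1+2H)) − (e^{(1+H)s}+e^{−(1+H)s})/(2(1+2H)). -/
/-!
With `x = exp (-s)`, the power term of `rhoIFBM H s` is `exp ((1 + H) * s) * (1 - x) ^ (2 * (1 + H))`.
From `1 - x ≤ exp (-x)` and `exp (-y) ≤ 1 - y + y ^ 2 / 2` one gets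
`(1 - x) ^ p ≤ 1 - p * x + (p * x) ^ 2 / 2` with `p = 2 * (1 + H)`. The contributions of order
`exp ((1 + H) * s)` and `exp (H * s)` then cancel exactly, and since `exp (-H * s) ≤ exp (-(1 - H) * s)`
for `H ≥ 1 / 2`, what is left is at most
`2 * (1 + H) * (2 + H) / (2 * (1 + 2 * H)) * exp (-(1 - H) * s)`. The claim follows from
`2 * (1 + H) * (2 + H) ≤ 13 / 3 * (1 + 2 * H)` on `[1 / 2, 1]`.
-/

open Real

theorem exp_neg_le_quadratic {y : ℝ} (hy : 0 ≤ y) : Real.exp (-y) ≤ 1 - y + y ^ 2 / 2 := by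
  have h := Real.quadratic_le_exp_of_nonneg hy
  have hq : 0 < 1 - y + y ^ 2 / 2 := by nlinarith [sq_nonneg (y - 1)]
  rw [Real.exp_neg, inv_le_iff_one_le_mul₀ (Real.exp_pos y)]
  -- `(1 - y + y ^ 2 / 2) * (1 + y + y ^ 2 / 2) = 1 + y ^ 4 / 4`
  nlinarith [mul_le_mul_of_nonneg_left h hq.le, sq_nonneg (y ^ 2)]

/-- The power term of `rhoIFBM`, bounded by the second-order expansion in `exp (-s)` that cancels
its growing part. -/
theorem power_term_le {H s : ℝ} (hH : 0 ≤ H) (hs : 0 ≤ s) :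
    (Real.exp (s / 2) - Real.exp (-s / 2)) ^ (2 * (1 + H)) ≤
      Real.exp ((1 + H) * s) - 2 * (1 + H) * Real.exp (H * s)
        + 2 * (1 + H) ^ 2 * Real.exp (-((1 - H) * s)) := by
  have hx1 : Real.exp (-s) ≤ 1 := Real.exp_le_one_iff.2 (by linarith)
  have hbase : Real.exp (s / 2) - Real.exp (-s / 2)
      = Real.exp (s / 2) * (1 - Real.exp (-s)) := by
    rw [mul_sub, mul_one, ← Real.exp_add]; ring_nf
  have h1 : (1 - Real.exp (-s)) ^ (2 * (1 + H)) ≤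
      1 - 2 * (1 + H) * Real.exp (-s) + (2 * (1 + H) * Real.exp (-s)) ^ 2 / 2 := by
    have h2 : (1 - Real.exp (-s)) ^ (2 * (1 + H)) ≤
        Real.exp (-Real.exp (-s)) ^ (2 * (1 + H)) :=
      Real.rpow_le_rpow (by linarith) (Real.one_sub_le_exp_neg _) (by linarith)
    rw [← Real.exp_mul] at h2
    have h3 := exp_neg_le_quadratic (y := 2 * (1 + H) * Real.exp (-s)) (by positivity)
    refine h2.trans (le_trans (le_of_eq ?_) h3)
    ring_nf
  rw [hbase, Real.mul_rpow (Real.exp_pos _).le (by linarith), ← Real.exp_mul,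
    show s / 2 * (2 * (1 + H)) = (1 + H) * s by ring]
  have e1 : Real.exp (H * s) = Real.exp ((1 + H) * s) * Real.exp (-s) := by
    rw [← Real.exp_add]; ring_nf
  have e2 : Real.exp (-((1 - H) * s)) = Real.exp ((1 + H) * s) * Real.exp (-s) ^ 2 := by
    rw [sq, ← Real.exp_add, ← Real.exp_add]; ring_nf
  rw [e1, e2]
  refine (mul_le_mul_of_nonneg_left h1 (Real.exp_pos _).le).trans (le_of_eq ?_)
  ring

theorem stmt4 (H : ℝ) (hH : H ∈ Set.Ioo (1 / 2 : ℝ) 1) (τ : ℝ) (hτ : 0 ≤ τ) :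
    rhoIFBM H (τ / (1 - H)) ≤ 13 / 6 * Real.exp (-τ) := by
  obtain ⟨h1, h2⟩ := hH
  have hd : 0 < 1 - H := by linarith
  obtain ⟨s, hs⟩ : ∃ s, s = τ / (1 - H) := ⟨_, rfl⟩
  have hs0 : 0 ≤ s := hs ▸ div_nonneg hτ hd.le
  have hτs : τ = (1 - H) * s := by rw [hs]; field_simp
  rw [← hs, hτs, rhoIFBM]
  have hp := power_term_le (H := H) (by linarith) hs0
  have hm : Real.exp (-H * s) ≤ Real.exp (-((1 - H) * s)) :=
    Real.exp_le_exp.2 (by nlinarith)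
  have hpos := Real.exp_pos (-(1 + H) * s)
  have hE := Real.exp_pos (-((1 - H) * s))
  have hm' := mul_le_mul_of_nonneg_left hm (by linarith : 0 ≤ 2 * (1 + H))
  have hc : 2 * (1 + H) * (2 + H) * Real.exp (-((1 - H) * s))
      ≤ 13 / 3 * (1 + 2 * H) * Real.exp (-((1 - H) * s)) :=
    mul_le_mul_of_nonneg_right (by nlinarith) hE.le
  have hD : 0 < 2 * (1 + 2 * H) := by linarith
  have key : 2 * (1 + H) * (Real.exp (-H * s) + Real.exp (H * s))
      + (Real.exp (s / 2) - Real.exp (-s / 2)) ^ (2 * (1 + H))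
      - (Real.exp ((1 + H) * s) + Real.exp (-(1 + H) * s))
      ≤ 13 / 6 * Real.exp (-((1 - H) * s)) * (2 * (1 + 2 * H)) := by
    linarith
  refine le_trans (le_of_eq ?_) ((div_le_iff₀ hD).2 key)
  have : 1 + 2 * H ≠ 0 := by linarith
  field_simp
end

section
/- There is a uniform Lipschitz-type bound near the diagonal: for every H ∈ [1/2,1) and every ε > 0, one has 1 − ρ_H(ε/(1−H)) ≤ 6·ε, where ρ_H is defined as ρ_H(s) := (1+H)(e^{−Hs}+e^{Hs})/(1+2H) + (e^{s/2}−e^{−s/2})^{2(1+H)}/(2(1+2H)) − (e^{(1+H)s}+e^{−(1+H)s})/(2(1+2H)). -/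
/-!
Put `δ = 1 - H`, `x = exp (-s)` and `t = exp (-δ s)`. Every exponential in `rhoIFBM H s` is a
monomial in `x` and `t`, and the power term is `(t / x²) (1 - x)⁴ (1 - x)^(-2δ)`. The second-order
lower bound `1 + 2δ x + δ (1 + 2δ) x² ≤ (1 - x)^(-2δ)` makes the divergent terms `t / x²` and
`t / x` cancel, and leaves `(3 - 2δ) ρ ≥ t (3 - 2δ - (3/2) δ (1 - x))`. Since `1 - x ≤ s` and
`1 - t ≤ δ s`, this gives `(3 - 2δ) (1 - ρ) ≤ (3 - 2δ + 3/2) δ s`, which is more than needed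
because `3 - 2δ ≥ 2`.
-/


open Real

lemma add_sq_div_two_le_neg_log {x : ℝ} (h0 : 0 ≤ x) (h1 : x < 1) :
    x + x ^ 2 / 2 ≤ -Real.log (1 - x) := by
  have h := Real.hasSum_pow_div_log_of_abs_lt_one (x := x) (by rwa [abs_of_nonneg h0])
  have h2 := sum_le_hasSum (Finset.range 2) (fun i _ => by positivity) h
  norm_num [Finset.sum_range_succ] at h2
  linarith

/-- The right-hand side is `(1 - x) ^ (-2 * d)`, and the left-hand side its second-order Taylor
polynomial at `x = 0`. -/
lemma taylor_le_exp_neg_log {x d : ℝ} (h0 : 0 ≤ x) (h1 : x < 1) (hd : 0 ≤ d) :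
    1 + 2 * d * x + d * (1 + 2 * d) * x ^ 2 ≤ Real.exp (-(2 * d) * Real.log (1 - x)) := by
  have hl := add_sq_div_two_le_neg_log h0 h1
  have hm : 2 * d * (x + x ^ 2 / 2) ≤ -(2 * d) * Real.log (1 - x) := by nlinarith
  have hq := Real.quadratic_le_exp_of_nonneg (x := 2 * d * (x + x ^ 2 / 2)) (by positivity)
  have he := Real.exp_le_exp.mpr hm
  have hsq : d ^ 2 * x ^ 2 ≤ d ^ 2 * (x + x ^ 2 / 2) ^ 2 := by
    gcongr
    nlinarith [sq_nonneg x]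
  nlinarith

lemma sinh_rpow_eq {s d : ℝ} (hs : 0 < s) :
    (Real.exp (s / 2) - Real.exp (-s / 2)) ^ (2 * (1 + (1 - d)))
      = Real.exp (-d * s) / Real.exp (-s) ^ 2 * ((1 - Real.exp (-s)) ^ 4
        * Real.exp (-(2 * d) * Real.log (1 - Real.exp (-s)))) := by
  have hx : 0 < 1 - Real.exp (-s) := by
    have : Real.exp (-s) < 1 := Real.exp_lt_one_iff.mpr (by linarith)
    linarith
  have hfac : Real.exp (s / 2) - Real.exp (-s / 2)
      = Real.exp (s / 2) * (1 - Real.exp (-s)) := by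
    rw [mul_sub, ← Real.exp_add]
    ring_nf
  have h4 : (1 - Real.exp (-s)) ^ 4 = Real.exp (4 * Real.log (1 - Real.exp (-s))) := by
    rw [mul_comm, Real.exp_mul, Real.exp_log hx]
    norm_cast
  rw [hfac, Real.mul_rpow (Real.exp_pos _).le hx.le, ← Real.exp_mul,
    Real.rpow_def_of_pos hx, h4, ← Real.exp_nat_mul, ← Real.exp_sub, ← Real.exp_add,
    ← Real.exp_add, ← Real.exp_add]
  congr 1
  push_cast
  ring

/-- The lower bound for `(1 + 2 * H) * rhoIFBM H s` in the variables `d = 1 - H`, `x = exp (-s)`,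
`t = exp (-d * s)`, with `e` in the role of `(1 - x) ^ (-2 * d)`. -/
lemma core_bound {x t d e : ℝ} (hx : 0 < x) (hx1 : x < 1) (ht : 0 < t) (ht1 : t ≤ 1)
    (hd : 0 ≤ d) (hd1 : d ≤ 1 / 2)
    (he : 1 + 2 * d * x + d * (1 + 2 * d) * x ^ 2 ≤ e) :
    t * (3 - 2 * d - 3 / 2 * d * (1 - x)) ≤
      (2 - d) * (x / t + t / x) + t / x ^ 2 * ((1 - x) ^ 4 * e) / 2
        - (t / x ^ 2 + x ^ 2 / t) / 2 := by
  have h1 : t / x ^ 2 * ((1 - x) ^ 4 * (1 + 2 * d * x + d * (1 + 2 * d) * x ^ 2))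
      ≤ t / x ^ 2 * ((1 - x) ^ 4 * e) := by gcongr
  have hinv : t ≤ 1 / t := by
    rw [le_div_iff₀ ht]
    nlinarith
  have h2 : t * (x * (2 - d - x / 2)) ≤ 1 / t * (x * (2 - d - x / 2)) :=
    mul_le_mul_of_nonneg_right hinv (mul_nonneg hx.le (by linarith))
  have hid : (2 - d) * (x / t + t / x)
      + t / x ^ 2 * ((1 - x) ^ 4 * (1 + 2 * d * x + d * (1 + 2 * d) * x ^ 2)) / 2
        - (t / x ^ 2 + x ^ 2 / t) / 2
      = 1 / t * (x * (2 - d - x / 2)) - t * (x * (2 - d - x / 2))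
        + t * (3 - 2 * d - d * ((1 - x) * (3 / 2 - 3 / 2 * x - x ^ 2 / 2 + x ^ 3 / 2))
          + d ^ 2 * (1 - x) ^ 4) := by
    field_simp
    ring
  have hpoly : (1 - x) * (3 / 2 - 3 / 2 * x - x ^ 2 / 2 + x ^ 3 / 2) ≤ (1 - x) * (3 / 2) := by
    apply mul_le_mul_of_nonneg_left _ (by linarith)
    nlinarith [mul_nonneg (sq_nonneg x) (sub_nonneg.mpr hx1.le)]
  have h3 : t * (3 - 2 * d - 3 / 2 * d * (1 - x)) ≤
      t * (3 - 2 * d - d * ((1 - x) * (3 / 2 - 3 / 2 * x - x ^ 2 / 2 + x ^ 3 / 2))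
          + d ^ 2 * (1 - x) ^ 4) := by
    apply mul_le_mul_of_nonneg_left _ ht.le
    have := mul_le_mul_of_nonneg_left hpoly hd
    have : 0 ≤ d ^ 2 * (1 - x) ^ 4 := by positivity
    linarith
  linarith

lemma one_sub_rho_le {s d : ℝ} (hs : 0 < s) (hd : 0 < d) (hd1 : d ≤ 1 / 2) :
    1 - rhoIFBM (1 - d) s ≤ 6 * (d * s) := by
  have hx1 : Real.exp (-s) < 1 := Real.exp_lt_one_iff.mpr (by linarith)
  have ht1 : Real.exp (-d * s) ≤ 1 := Real.exp_le_one_iff.mpr (by nlinarith)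
  have hcore := core_bound (Real.exp_pos (-s)) hx1 (Real.exp_pos (-d * s)) ht1 hd.le hd1
    (taylor_le_exp_neg_log (Real.exp_pos (-s)).le hx1 hd.le)
  have e1 : Real.exp (-(1 - d) * s) = Real.exp (-s) / Real.exp (-d * s) := by
    rw [← Real.exp_sub]
    ring_nf
  have e2 : Real.exp ((1 - d) * s) = Real.exp (-d * s) / Real.exp (-s) := by
    rw [← Real.exp_sub]
    ring_nf
  have e3 : Real.exp ((1 + (1 - d)) * s) = Real.exp (-d * s) / Real.exp (-s) ^ 2 := by
    rw [← Real.exp_nat_mul, ← Real.exp_sub]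
    push_cast
    ring_nf
  have e4 : Real.exp (-(1 + (1 - d)) * s) = Real.exp (-s) ^ 2 / Real.exp (-d * s) := by
    rw [← Real.exp_nat_mul, ← Real.exp_sub]
    push_cast
    ring_nf
  have hc : 0 < 3 - 2 * d := by linarith
  have hx2 : 1 - Real.exp (-s) ≤ s := by linarith [Real.add_one_le_exp (-s)]
  have ht2 : 1 - Real.exp (-d * s) ≤ d * s := by linarith [Real.add_one_le_exp (-d * s)]
  have ht0 := Real.exp_pos (-d * s)
  unfold rhoIFBM
  rw [sinh_rpow_eq hs, e1, e2, e3, e4]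
  set x := Real.exp (-s)
  set t := Real.exp (-d * s)
  set e := Real.exp (-(2 * d) * Real.log (1 - x))
  have hρ : (1 + (1 - d)) * (x / t + t / x) / (1 + 2 * (1 - d))
      + t / x ^ 2 * ((1 - x) ^ 4 * e) / (2 * (1 + 2 * (1 - d)))
      - (t / x ^ 2 + x ^ 2 / t) / (2 * (1 + 2 * (1 - d)))
      = ((2 - d) * (x / t + t / x) + t / x ^ 2 * ((1 - x) ^ 4 * e) / 2
        - (t / x ^ 2 + x ^ 2 / t) / 2) / (3 - 2 * d) := by
    rw [show 1 + 2 * (1 - d) = 3 - 2 * d by ring, show 1 + (1 - d) = 2 - d by ring]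
    generalize x / t + t / x = A
    generalize t / x ^ 2 * ((1 - x) ^ 4 * e) = B
    generalize t / x ^ 2 + x ^ 2 / t = C
    field_simp
  rw [hρ, sub_le_comm, le_div_iff₀ hc]
  refine le_trans ?_ hcore
  have hds : 0 < d * s := mul_pos hd hs
  have a1 : (3 - 2 * d) * (1 - t) ≤ (3 - 2 * d) * (d * s) := mul_le_mul_of_nonneg_left ht2 hc.le
  have a2 : t * (d * (1 - x)) ≤ 1 * (d * s) :=
    mul_le_mul ht1 (mul_le_mul_of_nonneg_left hx2 hd.le)
      (mul_nonneg hd.le (by linarith)) zero_le_one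
  have a3 : 0 ≤ (1 / 2 - d) * (d * s) := mul_nonneg (by linarith) hds.le
  nlinarith

theorem stmt5 (H : ℝ) (hH : H ∈ Set.Ico (1 / 2 : ℝ) 1) (ε : ℝ) (hε : 0 < ε) :
    1 - rhoIFBM H (ε / (1 - H)) ≤ 6 * ε := by
  obtain ⟨h1, h2⟩ := hH
  have hd : 0 < 1 - H := by linarith
  have h := one_sub_rho_le (div_pos hε hd) hd (by linarith)
  rwa [mul_div_cancel₀ _ hd.ne', sub_sub_cancel] at h
end

section
/- For every H ∈ (0,1/2), the Gamma function satisfies Γ(1/2+H)·Γ(1−2H)/Γ(1/2−H) ≤ 1. -/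
open Real

/-!
By Legendre's duplication formula at `s = 1/2 - H`, the quotient equals
`Γ(1/2 + H) Γ(1 - H) 2^(-2H) / √π`. Both `1/2 + H` and `1 - H` lie in `[1/2, 1]`, and they are
convex combinations of `1/2` and `1` with complementary weights, so log-convexity of `Γ`, with
`Γ(1/2) = √π` and `Γ(1) = 1`, bounds their product by `√π`; the factor `2^(-2H)` is at most `1`.
-/

theorem stmt15 (H : ℝ) (hH : H ∈ Set.Ioo (0 : ℝ) (1 / 2)) :
    Real.Gamma (1 / 2 + H) * Real.Gamma (1 - 2 * H) / Real.Gamma (1 / 2 - H) ≤ 1 := by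
  obtain ⟨h0, h1⟩ := hH
  have hpi : 0 < √π := Real.sqrt_pos.2 Real.pi_pos
  have hx : 0 < Real.Gamma (1 / 2 - H) := Real.Gamma_pos_of_pos (by linarith)
  have hA : Real.Gamma (1 / 2 + H) ≤ √π ^ (1 - 2 * H) := by
    have h := Real.Gamma_mul_add_mul_le_rpow_Gamma_mul_rpow_Gamma (s := 1 / 2) (t := 1)
      (a := 1 - 2 * H) (b := 2 * H) (by norm_num) one_pos (by linarith) (by linarith) (by ring)
    rw [Real.Gamma_one_half_eq, Real.Gamma_one, Real.one_rpow, mul_one, mul_one] at h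
    convert h using 2
    ring
  have hB : Real.Gamma (1 - H) ≤ √π ^ (2 * H) := by
    have h := Real.Gamma_mul_add_mul_le_rpow_Gamma_mul_rpow_Gamma (s := 1 / 2) (t := 1)
      (a := 2 * H) (b := 1 - 2 * H) (by norm_num) one_pos (by linarith) (by linarith) (by ring)
    rw [Real.Gamma_one_half_eq, Real.Gamma_one, Real.one_rpow, mul_one, mul_one] at h
    convert h using 2
    ring
  have hAB : Real.Gamma (1 / 2 + H) * Real.Gamma (1 - H) ≤ √π := by
    calc _ ≤ √π ^ (1 - 2 * H) * √π ^ (2 * H) :=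
          mul_le_mul hA hB (Real.Gamma_pos_of_pos (by linarith)).le (by positivity)
      _ = √π := by rw [← Real.rpow_add hpi, sub_add_cancel, Real.rpow_one]
  have hdup : Real.Gamma (1 / 2 - H) * Real.Gamma (1 - H)
      = Real.Gamma (1 - 2 * H) * 2 ^ (2 * H) * √π := by
    have h := Real.Gamma_mul_Gamma_add_half (1 / 2 - H)
    rwa [show 1 / 2 - H + 1 / 2 = 1 - H by ring, show 2 * (1 / 2 - H) = 1 - 2 * H by ring,
      sub_sub_cancel] at h
  have h2 : (1 : ℝ) ≤ 2 ^ (2 * H) := Real.one_le_rpow (by norm_num) (by linarith)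
  have hA0 : 0 < Real.Gamma (1 / 2 + H) := Real.Gamma_pos_of_pos (by linarith)
  have hC0 : 0 < Real.Gamma (1 - 2 * H) := Real.Gamma_pos_of_pos (by linarith)
  rw [div_le_one hx]
  refine le_of_mul_le_mul_right ?_ hpi
  calc Real.Gamma (1 / 2 + H) * Real.Gamma (1 - 2 * H) * √π
      ≤ Real.Gamma (1 / 2 + H) * Real.Gamma (1 - 2 * H) * √π * 2 ^ (2 * H) :=
        le_mul_of_one_le_right (by positivity) h2
    _ = Real.Gamma (1 / 2 - H) * (Real.Gamma (1 / 2 + H) * Real.Gamma (1 - H)) := by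
        linear_combination -Real.Gamma (1 / 2 + H) * hdup
    _ ≤ Real.Gamma (1 / 2 - H) * √π := mul_le_mul_of_nonneg_left hAB hx.le
end
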